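/- Let A be a unital C*-algebra, n,m ≥ 2, Θ = (q_{ij}) with |q_{ij}| = 1, and let s_1,…,s_n, t_1,…,t_m ∈ A satisfy the O_n⊗_Θ O_m relations. Fix k,l ≥ 0 and set s_γ = s_1^{2k} s_2 t_1^{2l} t_2 and w = Σ_{δ ∈ {1,…,n}^k, ε ∈ {1,…,m}^l} s_δ t_ε s_γ t_ε* s_δ*. Then: (i) w is an isometry, w* w = 1; (ii) w commutes with every element s_μ t_{μ'} t_{ν'}* s_ν* with μ,ν ∈ {1,…,n}^k and μ',ν' ∈ {1,…,m}^l; (iii) for every word y = s_μ t_{μ'} t_{ν'}* s_ν* with |μ|,|ν| ≤ k and |μ'|,|ν'| ≤ l, one has w* y w = y if |μ| = |ν| and |μ'| = |ν'|, and w* y w = 0 otherwise. -/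

import Mathlib

open scoped BigOperators

/-- Product `s_{μ_1} ⋯ s_{μ_k}` associated to a word `μ ∈ {1,…,n}^k`. -/
noncomputable def wordProd {A : Type*} [Monoid A] {n k : ℕ} (s : Fin n → A)
    (μ : Fin k → Fin n) : A :=
  (List.ofFn fun i => s (μ i)).prod

/-!
The products `s_δ t_ε` with `|δ| = k` and `|ε| = l` form a Cuntz family `u`, and
`w = ∑ u_i s_γ u_i*` is the image of the isometry `s_γ` under the endomorphism `a ↦ ∑ u_i a u_i*`,
whose range commutes with the matrix units `u_i u_j*`. This gives (i) and (ii). If `|μ| = |ν|`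
and `|μ'| = |ν'|`, inserting `∑ u_c u_c* = 1` with words of the missing lengths writes `y` as a
sum of multiples of the matrix units, so `w` commutes with `y`.

Otherwise `w* y w` is a sum of terms `u_i (s_γ* u_i* y u_j s_γ) u_j*`. Modulo invertible scalars
all the `s`'s commute with all the `t`'s, so the bracket is a multiple of a product of an
`s`-factor and a `t`-factor. In the `s`-factor, `s_δ* s_μ s_ν* s_δ'` collapses to zero or to `s_ρ`
or `s_ρ*` with `1 ≤ |ρ| ≤ k` as soon as `|μ| ≠ |ν|`, and compressing `s_ρ` or `s_ρ*` by
`s_1^{2k} s_2` gives zero, because no shift of the word `1⋯12` by `|ρ|` letters agrees with it. The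
`t`-factor behaves in the same way when `|μ'| ≠ |ν'|`.
-/

section Families

theorem star_mul_mul_mul_self_eq_one {A : Type*} [Monoid A] [StarMul A] {a b : A}
    (ha : star a * a = 1) (hb : star b * b = 1) : star (a * b) * (a * b) = 1 := by
  rw [star_mul, mul_assoc, ← mul_assoc (star a), ha, one_mul, hb]

variable {A ι κ : Type*} [Semiring A] [StarRing A] [DecidableEq ι] [DecidableEq κ]

/-- A Toeplitz–Cuntz family: isometries with pairwise orthogonal ranges. -/
def IsToeplitzFamily (u : ι → A) : Prop :=
  ∀ i j, star (u i) * u j = if i = j then 1 else 0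

/-- A Cuntz family: isometries whose range projections are orthogonal and sum to `1`, that is,
a family satisfying the defining relations of the Cuntz algebra. -/
structure IsCuntzFamily [Fintype ι] (u : ι → A) : Prop where
  isToeplitzFamily : IsToeplitzFamily u
  sum_mul_star : ∑ i, u i * star (u i) = 1

namespace IsToeplitzFamily

variable {u : ι → A} {v : κ → A}

theorem star_mul_self (hu : IsToeplitzFamily u) (i : ι) : star (u i) * u i = 1 := by
  rw [hu, if_pos rfl]

theorem star_mul_of_ne (hu : IsToeplitzFamily u) {i j : ι} (hij : i ≠ j) :
    star (u i) * u j = 0 := by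
  rw [hu, if_neg hij]

theorem comp_injective (hu : IsToeplitzFamily u) {f : κ → ι} (hf : f.Injective) :
    IsToeplitzFamily (u ∘ f) := fun i j => by
  simp only [Function.comp_apply, hu (f i) (f j), hf.eq_iff]

theorem mul (hu : IsToeplitzFamily u) (hv : IsToeplitzFamily v) :
    IsToeplitzFamily fun p : ι × κ => u p.1 * v p.2 := by
  rintro ⟨i, i'⟩ ⟨j, j'⟩
  have hmid : star (u i * v i') * (u j * v j') = star (v i') * (star (u i) * u j) * v j' := by
    simp only [star_mul, mul_assoc]
  rw [hmid, hu i j]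
  by_cases hij : i = j <;> simp [hij, hv i' j']

end IsToeplitzFamily

namespace IsCuntzFamily

variable [Fintype ι] [Fintype κ] {u : ι → A} {v : κ → A}

theorem comp_equiv (hu : IsCuntzFamily u) (e : κ ≃ ι) : IsCuntzFamily (u ∘ e) where
  isToeplitzFamily := hu.isToeplitzFamily.comp_injective e.injective
  sum_mul_star := (e.sum_comp fun i => u i * star (u i)).trans hu.sum_mul_star

theorem mul (hu : IsCuntzFamily u) (hv : IsCuntzFamily v) :
    IsCuntzFamily fun p : ι × κ => u p.1 * v p.2 where
  isToeplitzFamily := hu.isToeplitzFamily.mul hv.isToeplitzFamily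
  sum_mul_star := by
    have hfactor (i : ι) (j : κ) :
        u i * v j * star (u i * v j) = u i * (v j * star (v j)) * star (u i) := by
      simp only [star_mul, mul_assoc]
    simp only [Fintype.sum_prod_type, hfactor, ← Finset.sum_mul, ← Finset.mul_sum,
      hv.sum_mul_star, mul_one, hu.sum_mul_star]

end IsCuntzFamily

end Families

section CanonicalEndo

variable {A ι : Type*} [Semiring A] [StarRing A] [Fintype ι]

/-- The map `a ↦ ∑ i, u i * a * star (u i)`, which for a Cuntz family `u` is the canonical
endomorphism of the Cuntz algebra. -/
def canonicalEndo (u : ι → A) (a : A) : A :=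
  ∑ i, u i * a * star (u i)

theorem star_canonicalEndo (u : ι → A) (a : A) :
    star (canonicalEndo u a) = canonicalEndo u (star a) := by
  simp only [canonicalEndo, star_sum, star_mul, star_star, mul_assoc]

theorem star_canonicalEndo_mul_mul_canonicalEndo (u : ι → A) (a y : A) :
    star (canonicalEndo u a) * y * canonicalEndo u a =
      ∑ i, ∑ j, u i * (star a * (star (u i) * y * u j) * a) * star (u j) := by
  rw [star_canonicalEndo]
  simp only [canonicalEndo, Finset.sum_mul, Finset.mul_sum, mul_assoc]
  exact Finset.sum_comm

variable [DecidableEq ι] {u : ι → A}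

theorem IsToeplitzFamily.canonicalEndo_mul_apply (hu : IsToeplitzFamily u) (a : A) (i : ι) :
    canonicalEndo u a * u i = u i * a := by
  simp [canonicalEndo, Finset.sum_mul, mul_assoc, hu _ i]

theorem IsToeplitzFamily.star_apply_mul_canonicalEndo (hu : IsToeplitzFamily u) (a : A) (i : ι) :
    star (u i) * canonicalEndo u a = a * star (u i) := by
  simpa only [star_mul, star_canonicalEndo, star_star] using
    congrArg star (hu.canonicalEndo_mul_apply (star a) i)

theorem IsToeplitzFamily.canonicalEndo_mul (hu : IsToeplitzFamily u) (a b : A) :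
    canonicalEndo u a * canonicalEndo u b = canonicalEndo u (a * b) :=
  (Finset.mul_sum ..).trans <| Finset.sum_congr rfl fun i _ => by
    rw [← mul_assoc, ← mul_assoc, hu.canonicalEndo_mul_apply, mul_assoc (u i)]

theorem IsToeplitzFamily.commute_canonicalEndo (hu : IsToeplitzFamily u) (a : A) (i j : ι) :
    Commute (canonicalEndo u a) (u i * star (u j)) := by
  rw [commute_iff_eq, ← mul_assoc, hu.canonicalEndo_mul_apply, mul_assoc, mul_assoc,
    hu.star_apply_mul_canonicalEndo]

theorem IsCuntzFamily.star_canonicalEndo_mul_self (hu : IsCuntzFamily u) {a : A}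
    (ha : star a * a = 1) : star (canonicalEndo u a) * canonicalEndo u a = 1 := by
  rw [star_canonicalEndo, hu.isToeplitzFamily.canonicalEndo_mul, ha, canonicalEndo]
  simp only [mul_one, hu.sum_mul_star]

end CanonicalEndo

section Words

variable {A : Type*} {n k : ℕ}

theorem wordProd_append [Monoid A] {l : ℕ} (s : Fin n → A) (μ : Fin k → Fin n)
    (ν : Fin l → Fin n) : wordProd s (Fin.append μ ν) = wordProd s μ * wordProd s ν := by
  have hmap {j : ℕ} (ρ : Fin j → Fin n) : wordProd s ρ = ((List.ofFn ρ).map s).prod := by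
    rw [List.map_ofFn]; rfl
  rw [hmap, hmap, hmap, List.ofFn_fin_append, List.map_append, List.prod_append]

theorem wordProd_const [Monoid A] (s : Fin n → A) (x : Fin n) :
    wordProd s (fun _ : Fin k => x) = s x ^ k := by
  simp [wordProd]

theorem wordProd_succ [Monoid A] (s : Fin n → A) (μ : Fin (k + 1) → Fin n) :
    wordProd s μ = s (μ 0) * wordProd s (Fin.tail μ) := by
  simp only [wordProd, List.ofFn_succ, List.prod_cons, Fin.tail]

variable [Semiring A] [StarRing A] {s : Fin n → A}

theorem isToeplitzFamily_wordProd (hs : IsToeplitzFamily s) (k : ℕ) :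
    IsToeplitzFamily (wordProd s : (Fin k → Fin n) → A) := by
  induction k with
  | zero => intro μ ν; simp [wordProd, Subsingleton.elim μ ν]
  | succ k ih =>
    convert (hs.mul ih).comp_injective (Fin.consEquiv fun _ : Fin (k + 1) => Fin n).symm.injective
    exact funext (wordProd_succ s)

theorem isCuntzFamily_wordProd (hs : IsCuntzFamily s) (k : ℕ) :
    IsCuntzFamily (wordProd s : (Fin k → Fin n) → A) := by
  induction k with
  | zero => exact ⟨isToeplitzFamily_wordProd hs.isToeplitzFamily 0, by simp [wordProd]⟩
  | succ k ih =>
    convert (hs.mul ih).comp_equiv (Fin.consEquiv fun _ : Fin (k + 1) => Fin n).symm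
    exact funext (wordProd_succ s)

theorem IsToeplitzFamily.star_wordProd_mul_wordProd_append (hs : IsToeplitzFamily s) {l : ℕ}
    (μ ν : Fin k → Fin n) (ρ : Fin l → Fin n) :
    star (wordProd s μ) * wordProd s (Fin.append ν ρ) =
      if μ = ν then wordProd s ρ else 0 := by
  rw [wordProd_append, ← mul_assoc, isToeplitzFamily_wordProd hs k μ ν, ite_mul, one_mul, zero_mul]

theorem IsToeplitzFamily.star_wordProd_mul_wordProd_eq_zero_or (hs : IsToeplitzFamily s) {l : ℕ}
    (hkl : k ≤ l) (μ : Fin k → Fin n) (ν : Fin l → Fin n) :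
    star (wordProd s μ) * wordProd s ν = 0 ∨
      ∃ ρ : Fin (l - k) → Fin n, star (wordProd s μ) * wordProd s ν = wordProd s ρ := by
  obtain ⟨d, rfl⟩ := Nat.exists_eq_add_of_le hkl
  rw [← Fin.append_castAdd_natAdd (f := ν), hs.star_wordProd_mul_wordProd_append,
    Nat.add_sub_cancel_left]
  split_ifs
  · exact .inr ⟨_, rfl⟩
  · exact .inl rfl

theorem IsToeplitzFamily.star_pow_mul_pow (hs : IsToeplitzFamily s) (x : Fin n) (p : ℕ) :
    star (s x ^ p) * s x ^ p = 1 := by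
  rw [← wordProd_const, (isToeplitzFamily_wordProd hs p).star_mul_self]

theorem IsToeplitzFamily.star_pow_mul_mul_pow_mul (hs : IsToeplitzFamily s) (x y : Fin n)
    (p : ℕ) : star (s x ^ p * s y) * (s x ^ p * s y) = 1 :=
  star_mul_mul_mul_self_eq_one (hs.star_pow_mul_pow x p) (hs.star_mul_self y)

end Words

section Aperiodic

variable {A : Type*} [Semiring A] [StarRing A] {n k : ℕ} {s : Fin n → A} {g : A}

/-- `g` is aperiodic up to length `k` with respect to `s` if compressing any nonempty word of
length at most `k` by `g` gives zero. For `g = wordProd s γ` with `k < |γ|` this holds as soon as no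
shift of the word `γ` by `1, …, k` letters agrees with `γ` on the overlap. -/
def IsAperiodic (s : Fin n → A) (k : ℕ) (g : A) : Prop :=
  ∀ ⦃d : ℕ⦄, 0 < d → d ≤ k → ∀ ρ : Fin d → Fin n, star g * wordProd s ρ * g = 0

theorem IsToeplitzFamily.isAperiodic_pow_mul (hs : IsToeplitzFamily s) {x y : Fin n}
    (hxy : x ≠ y) {p : ℕ} (hkp : k ≤ p) : IsAperiodic s k (s x ^ p * s y) := by
  intro d hd hdk ρ
  obtain ⟨e, rfl⟩ : ∃ e, p = d + e := Nat.exists_eq_add_of_le (hdk.trans hkp)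
  have hpow : star (s x ^ d) * wordProd s ρ = if (fun _ => x) = ρ then 1 else 0 := by
    rw [← wordProd_const, isToeplitzFamily_wordProd hs]
  have hletters : star (s y) * (s x ^ d * s y) = 0 := by
    rw [← mul_pow_sub_one hd.ne', ← mul_assoc, ← mul_assoc, hs.star_mul_of_ne hxy.symm,
      zero_mul, zero_mul]
  calc star (s x ^ (d + e) * s y) * wordProd s ρ * (s x ^ (d + e) * s y)
      = star (s x ^ d * s x ^ e * s y) * wordProd s ρ * (s x ^ e * s x ^ d * s y) := by
        rw [← pow_add, ← pow_add, add_comm e d]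
    _ = star (s y) * (star (s x ^ e) * (star (s x ^ d) * wordProd s ρ) * s x ^ e) *
          (s x ^ d * s y) := by
        simp only [star_mul, mul_assoc]
    _ = 0 := by
        rw [hpow]
        split_ifs
        · rw [mul_one, hs.star_pow_mul_pow, mul_one, hletters]
        · simp only [mul_zero, zero_mul]

theorem IsAperiodic.star_mul_mul_eq_zero_of_lt (hg : IsAperiodic s k g)
    (hs : IsToeplitzFamily s) {i j : ℕ} (hij : i < j) (hj : j ≤ k) (α : Fin i → Fin n)
    (β : Fin j → Fin n) : star g * (star (wordProd s α) * wordProd s β) * g = 0 := by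
  rcases hs.star_wordProd_mul_wordProd_eq_zero_or hij.le α β with hαβ | ⟨ρ, hαβ⟩
  · rw [hαβ, mul_zero, zero_mul]
  · rw [hαβ, hg (by omega) (by omega)]

theorem IsAperiodic.star_mul_mul_eq_zero_of_ne (hg : IsAperiodic s k g)
    (hs : IsToeplitzFamily s) {i j : ℕ} (hij : i ≠ j) (hi : i ≤ k) (hj : j ≤ k)
    (α : Fin i → Fin n) (β : Fin j → Fin n) :
    star g * (star (wordProd s α) * wordProd s β) * g = 0 := by
  rcases hij.lt_or_gt with hlt | hgt
  · exact hg.star_mul_mul_eq_zero_of_lt hs hlt hj α β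
  · simpa only [star_mul, star_star, star_zero, mul_assoc] using
      congrArg star (hg.star_mul_mul_eq_zero_of_lt hs hgt hi β α)

theorem IsAperiodic.compression_eq_zero (hg : IsAperiodic s k g) (hs : IsToeplitzFamily s)
    {i j : ℕ} (hij : i ≠ j) (hi : i ≤ k) (hj : j ≤ k) (δ δ' : Fin k → Fin n)
    (μ : Fin i → Fin n) (ν : Fin j → Fin n) :
    star g * (star (wordProd s δ) * (wordProd s μ * star (wordProd s ν)) * wordProd s δ') * g =
      0 := by
  have hregroup : star (wordProd s δ) * (wordProd s μ * star (wordProd s ν)) * wordProd s δ' =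
      star (star (wordProd s μ) * wordProd s δ) * (star (wordProd s ν) * wordProd s δ') := by
    simp only [star_mul, star_star, mul_assoc]
  rw [hregroup]
  rcases hs.star_wordProd_mul_wordProd_eq_zero_or hi μ δ with hα | ⟨α, hα⟩
  · simp only [hα, star_zero, zero_mul, mul_zero]
  rcases hs.star_wordProd_mul_wordProd_eq_zero_or hj ν δ' with hβ | ⟨β, hβ⟩
  · simp only [hβ, zero_mul, mul_zero]
  rw [hα, hβ]
  exact hg.star_mul_mul_eq_zero_of_ne hs (by omega) (by omega) (by omega) α β

end Aperiodic

section QuasiCommute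

variable {R A : Type*} [CommSemiring R] [Semiring A] [Algebra R A]

variable (R A) in
/-- Equality up to an invertible scalar, as a congruence on the multiplicative monoid of `A`. -/
def scalarCon : Con A where
  toSetoid := MulAction.orbitRel Rˣ A
  mul' := by
    rintro _ a _ b ⟨c, rfl⟩ ⟨d, rfl⟩
    exact ⟨c * d, (smul_mul_smul_comm c a d b).symm⟩

variable (R) in
/-- The projection of `A` onto the monoid of its elements up to invertible scalars, in which
quasi-commuting elements become commuting ones. -/
def scalarClass : A →* (scalarCon R A).Quotient :=
  (scalarCon R A).mk'

theorem scalarClass_eq_scalarClass_iff {x y : A} :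
    scalarClass R x = scalarClass R y ↔ ∃ c : Rˣ, c • y = x :=
  (scalarCon R A).eq

theorem scalarClass_eq_scalarClass_zero_iff {x : A} :
    scalarClass R x = scalarClass R 0 ↔ x = 0 := by
  simp only [scalarClass_eq_scalarClass_iff, smul_zero, exists_const, eq_comm]

variable (R) in
/-- Two elements quasi-commute if they commute up to an invertible scalar. -/
def QuasiCommute (x y : A) : Prop :=
  Commute (scalarClass R x) (scalarClass R y)

theorem quasiCommute_iff {x y : A} : QuasiCommute R x y ↔ ∃ c : Rˣ, c • (y * x) = x * y := by
  rw [QuasiCommute, commute_iff_eq, ← map_mul, ← map_mul, scalarClass_eq_scalarClass_iff]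

theorem IsCuntzFamily.quasiCommute_star [StarRing A] {ι : Type*} [Fintype ι] [DecidableEq ι]
    {u : ι → A} (hu : IsCuntzFamily u) {x : A} (hux : ∀ i, QuasiCommute R (u i) x) (i : ι) :
    QuasiCommute R (star (u i)) x := by
  choose c hc using fun j => quasiCommute_iff.1 (hux j).symm
  refine Commute.symm (quasiCommute_iff.2 ⟨(c i)⁻¹, ?_⟩)
  rw [inv_smul_eq_iff]
  calc star (u i) * x = ∑ j, star (u i) * (x * u j) * star (u j) := by
        simp only [mul_assoc, ← Finset.mul_sum, hu.sum_mul_star, mul_one]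
    _ = ∑ j, c j • (star (u i) * u j * (x * star (u j))) := by
        simp only [← hc, mul_smul_comm, smul_mul_assoc, mul_assoc]
    _ = c i • (x * star (u i)) := by
        simp [hu.isToeplitzFamily i]

theorem quasiCommute_of_mem_closure {S T : Set A}
    (hST : ∀ x ∈ S, ∀ y ∈ T, QuasiCommute R x y) {x y : A} (hx : x ∈ Submonoid.closure S)
    (hy : y ∈ Submonoid.closure T) : QuasiCommute R x y := by
  simp only [QuasiCommute] at hST ⊢
  induction hx using Submonoid.closure_induction with
  | mem x hx =>
    induction hy using Submonoid.closure_induction with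
    | mem y hy => exact hST x hx y hy
    | one => simp only [map_one, Commute.one_right]
    | mul y y' _ _ hxy hxy' => simpa only [map_mul] using hxy.mul_right hxy'
  | one => simp only [map_one, Commute.one_left]
  | mul x x' _ _ hxy hx'y => simpa only [map_mul] using hxy.mul_left hx'y

end QuasiCommute

section StarMonomials

variable {A ι : Type*} [Semiring A] [StarRing A]

/-- The monomials in the elements of a family and their adjoints. -/
def starMonomials (s : ι → A) : Submonoid A :=
  Submonoid.closure (Set.range s ∪ Set.range (star ∘ s))

theorem apply_mem_starMonomials (s : ι → A) (i : ι) : s i ∈ starMonomials s :=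
  Submonoid.subset_closure (.inl ⟨i, rfl⟩)

theorem star_mem_starMonomials {s : ι → A} {x : A} (hx : x ∈ starMonomials s) :
    star x ∈ starMonomials s := by
  induction hx using Submonoid.closure_induction with
  | mem x hx =>
    rcases hx with ⟨i, rfl⟩ | ⟨i, rfl⟩
    · exact Submonoid.subset_closure (.inr ⟨i, rfl⟩)
    · simpa only [Function.comp_apply, star_star] using apply_mem_starMonomials s i
  | one => simpa only [star_one] using one_mem (starMonomials s)
  | mul x y _ _ hx hy => simpa only [star_mul] using mul_mem hy hx

theorem wordProd_mem_starMonomials {n k : ℕ} (s : Fin n → A) (μ : Fin k → Fin n) :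
    wordProd s μ ∈ starMonomials s := by
  refine Submonoid.list_prod_mem _ fun x hx => ?_
  obtain ⟨i, rfl⟩ := List.mem_ofFn.1 hx
  exact apply_mem_starMonomials s (μ i)

/-- Every monomial in the `s i`, `star (s i)` quasi-commutes with every monomial in the `t j`,
`star (t j)`, the scalar being in `R`. -/
def MonomialsQuasiCommute {κ : Type*} (R : Type*) [CommSemiring R] [Algebra R A] (s : ι → A)
    (t : κ → A) : Prop :=
  ∀ x ∈ starMonomials s, ∀ y ∈ starMonomials t, QuasiCommute R x y

theorem IsCuntzFamily.monomialsQuasiCommute {R κ : Type*} [CommSemiring R] [Algebra R A]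
    [Fintype ι] [DecidableEq ι] [Fintype κ] [DecidableEq κ] {s : ι → A} {t : κ → A}
    (hs : IsCuntzFamily s) (ht : IsCuntzFamily t) (hst : ∀ i j, QuasiCommute R (s i) (t j)) :
    MonomialsQuasiCommute R s t := by
  have hst' (i : ι) (j : κ) : QuasiCommute R (s i) (star (t j)) :=
    (ht.quasiCommute_star (fun j => (hst i j).symm) j).symm
  refine fun x hx y hy => quasiCommute_of_mem_closure ?_ hx hy
  rintro _ (⟨i, rfl⟩ | ⟨i, rfl⟩) _ (⟨j, rfl⟩ | ⟨j, rfl⟩)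
  · exact hst i j
  · exact hst' i j
  · exact hs.quasiCommute_star (fun i => hst i j) i
  · exact hs.quasiCommute_star (fun i => hst' i j) i

end StarMonomials

section Splitting

variable {R A ι κ : Type*} [CommSemiring R] [Semiring A] [StarRing A] [Algebra R A]
  {s : ι → A} {t : κ → A}

variable (R) in
/-- `z` is, up to an invertible scalar, the product of a monomial `x` in the `s i`, `star (s i)`
and a monomial `y` in the `t j`, `star (t j)`. -/
structure SplitsAs (s : ι → A) (t : κ → A) (z x y : A) : Prop where
  left_mem : x ∈ starMonomials s
  right_mem : y ∈ starMonomials t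
  class_eq : scalarClass R z = scalarClass R (x * y)

theorem splitsAs_mul {x y : A} (hx : x ∈ starMonomials s) (hy : y ∈ starMonomials t) :
    SplitsAs R s t (x * y) x y :=
  ⟨hx, hy, rfl⟩

theorem splitsAs_star_mul (hst : MonomialsQuasiCommute R s t) {x y : A}
    (hx : x ∈ starMonomials s) (hy : y ∈ starMonomials t) :
    SplitsAs R s t (star (x * y)) (star x) (star y) where
  left_mem := star_mem_starMonomials hx
  right_mem := star_mem_starMonomials hy
  class_eq := by
    rw [star_mul, map_mul, map_mul]
    exact (hst _ (star_mem_starMonomials hx) _ (star_mem_starMonomials hy)).symm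

namespace SplitsAs

variable {z z' x x' y y' : A}

theorem mul (hst : MonomialsQuasiCommute R s t) (hz : SplitsAs R s t z x y)
    (hz' : SplitsAs R s t z' x' y') :
    SplitsAs R s t (z * z') (x * x') (y * y') where
  left_mem := mul_mem hz.left_mem hz'.left_mem
  right_mem := mul_mem hz.right_mem hz'.right_mem
  class_eq := by
    simp only [map_mul, hz.class_eq, hz'.class_eq]
    exact Commute.mul_mul_mul_comm (hst x' hz'.left_mem y hz.right_mem).symm _ _

theorem exists_smul_eq (hz : SplitsAs R s t z x y) (hz' : SplitsAs R s t z' x y) :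
    ∃ c : Rˣ, c • z' = z :=
  scalarClass_eq_scalarClass_iff.1 (hz.class_eq.trans hz'.class_eq.symm)

theorem eq_zero (hz : SplitsAs R s t z x y) (hxy : x = 0 ∨ y = 0) : z = 0 := by
  have hprod : x * y = 0 := by
    rcases hxy with rfl | rfl
    · exact zero_mul y
    · exact mul_zero x
  exact scalarClass_eq_scalarClass_zero_iff.1 (hprod ▸ hz.class_eq)

end SplitsAs

end Splitting

section Biwords

variable {R A : Type*} [CommSemiring R] [Semiring A] [StarRing A] [Algebra R A]
  {n m : ℕ} {s : Fin n → A} {t : Fin m → A} {k l : ℕ}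

/-- The product `s_μ t_{μ'}` associated to a pair of words `(μ, μ')`. -/
noncomputable def biwordProd (s : Fin n → A) (t : Fin m → A)
    (a : (Fin k → Fin n) × (Fin l → Fin m)) : A :=
  wordProd s a.1 * wordProd t a.2

theorem wordProd_mul_mul_star_mul_star {k' l' : ℕ} (μ : Fin k → Fin n) (μ' : Fin l → Fin m)
    (ν : Fin k' → Fin n) (ν' : Fin l' → Fin m) :
    wordProd s μ * wordProd t μ' * star (wordProd t ν') * star (wordProd s ν) =
      biwordProd s t (μ, μ') * star (biwordProd s t (ν, ν')) := by
  simp only [biwordProd, star_mul, mul_assoc]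

theorem isCuntzFamily_biwordProd (hs : IsCuntzFamily s) (ht : IsCuntzFamily t) (k l : ℕ) :
    IsCuntzFamily (biwordProd s t : (Fin k → Fin n) × (Fin l → Fin m) → A) :=
  (isCuntzFamily_wordProd hs k).mul (isCuntzFamily_wordProd ht l)

theorem splitsAs_biwordProd (a : (Fin k → Fin n) × (Fin l → Fin m)) :
    SplitsAs R s t (biwordProd s t a) (wordProd s a.1) (wordProd t a.2) :=
  splitsAs_mul (wordProd_mem_starMonomials s a.1) (wordProd_mem_starMonomials t a.2)

theorem splitsAs_star_biwordProd (hst : MonomialsQuasiCommute R s t)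
    (a : (Fin k → Fin n) × (Fin l → Fin m)) :
    SplitsAs R s t (star (biwordProd s t a)) (star (wordProd s a.1)) (star (wordProd t a.2)) :=
  splitsAs_star_mul hst (wordProd_mem_starMonomials s a.1) (wordProd_mem_starMonomials t a.2)

theorem exists_smul_biwordProd_append_mul_star (hst : MonomialsQuasiCommute R s t) {d e : ℕ}
    (a b : (Fin k → Fin n) × (Fin l → Fin m)) (c : (Fin d → Fin n) × (Fin e → Fin m)) :
    ∃ r : Rˣ, r • (biwordProd s t (Fin.append a.1 c.1, Fin.append a.2 c.2) *
        star (biwordProd s t (Fin.append b.1 c.1, Fin.append b.2 c.2))) =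
      biwordProd s t a * biwordProd s t c *
        (star (biwordProd s t c) * star (biwordProd s t b)) := by
  have hlong := (splitsAs_biwordProd (Fin.append a.1 c.1, Fin.append a.2 c.2)).mul hst
    (splitsAs_star_biwordProd hst (Fin.append b.1 c.1, Fin.append b.2 c.2))
  have hshort := ((splitsAs_biwordProd a).mul hst (splitsAs_biwordProd c)).mul hst
    ((splitsAs_star_biwordProd hst c).mul hst (splitsAs_star_biwordProd hst b))
  simp only [wordProd_append, star_mul] at hlong
  exact hshort.exists_smul_eq hlong

theorem IsCuntzFamily.commute_biwordProd_mul_star_of_add (hs : IsCuntzFamily s)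
    (ht : IsCuntzFamily t) (hst : MonomialsQuasiCommute R s t) {d e : ℕ} {w : A}
    (hw : ∀ a b : (Fin (k + d) → Fin n) × (Fin (l + e) → Fin m),
      Commute w (biwordProd s t a * star (biwordProd s t b)))
    (a b : (Fin k → Fin n) × (Fin l → Fin m)) :
    Commute w (biwordProd s t a * star (biwordProd s t b)) := by
  have hexpand : biwordProd s t a * star (biwordProd s t b) =
      ∑ c : (Fin d → Fin n) × (Fin e → Fin m),
        biwordProd s t a * biwordProd s t c *
          (star (biwordProd s t c) * star (biwordProd s t b)) := by
    have hfactor (c : (Fin d → Fin n) × (Fin e → Fin m)) :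
        biwordProd s t a * biwordProd s t c *
            (star (biwordProd s t c) * star (biwordProd s t b)) =
          biwordProd s t a * (biwordProd s t c * star (biwordProd s t c)) *
            star (biwordProd s t b) := by
      simp only [mul_assoc]
    simp only [hfactor, ← Finset.sum_mul, ← Finset.mul_sum,
      (isCuntzFamily_biwordProd hs ht d e).sum_mul_star, mul_one]
  rw [hexpand]
  refine Commute.sum_right _ _ _ fun c _ => ?_
  obtain ⟨r, hr⟩ := exists_smul_biwordProd_append_mul_star hst a b c
  exact hr ▸ (hw _ _).smul_right r

theorem IsAperiodic.biword_compression_eq_zero (hst : MonomialsQuasiCommute R s t)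
    (hs : IsToeplitzFamily s) (ht : IsToeplitzFamily t) {g h : A} (hg : IsAperiodic s k g)
    (hh : IsAperiodic t l h) (hgs : g ∈ starMonomials s) (hht : h ∈ starMonomials t)
    {k₁ k₂ l₁ l₂ : ℕ} (hne : ¬(k₁ = k₂ ∧ l₁ = l₂)) (hk₁ : k₁ ≤ k) (hk₂ : k₂ ≤ k) (hl₁ : l₁ ≤ l)
    (hl₂ : l₂ ≤ l) (i j : (Fin k → Fin n) × (Fin l → Fin m))
    (a : (Fin k₁ → Fin n) × (Fin l₁ → Fin m)) (b : (Fin k₂ → Fin n) × (Fin l₂ → Fin m)) :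
    star (g * h) * (star (biwordProd s t i) * (biwordProd s t a * star (biwordProd s t b)) *
      biwordProd s t j) * (g * h) = 0 := by
  have hmonomial := (splitsAs_biwordProd a).mul hst (splitsAs_star_biwordProd hst b)
  have hinner := ((splitsAs_star_biwordProd hst i).mul hst hmonomial).mul hst
    (splitsAs_biwordProd j)
  have hsplit := ((splitsAs_star_mul hst hgs hht).mul hst hinner).mul hst (splitsAs_mul hgs hht)
  refine hsplit.eq_zero ?_
  rcases not_and_or.1 hne with hk | hl
  · exact .inl (hg.compression_eq_zero hs hk hk₁ hk₂ i.1 j.1 a.1 b.1)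
  · exact .inr (hh.compression_eq_zero ht hl hl₁ hl₂ i.2 j.2 a.2 b.2)

end Biwords

theorem stmt_17_general {R A : Type*} [CommSemiring R] [Semiring A] [StarRing A] [Algebra R A]
    {n m : ℕ} (q : Fin n → Fin m → Rˣ) {s : Fin n → A} {t : Fin m → A}
    (hs : IsCuntzFamily s) (ht : IsCuntzFamily t)
    (hcomm : ∀ i j, s i * t j = q i j • (t j * s i))
    {x x' : Fin n} {y y' : Fin m} (hx : x ≠ x') (hy : y ≠ y')
    {k l p r : ℕ} (hp : k ≤ p) (hr : l ≤ r)
    {sγ w : A} (hγ : sγ = s x ^ p * s x' * (t y ^ r * t y'))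
    (hw : w = ∑ δ : Fin k → Fin n, ∑ ε : Fin l → Fin m,
      wordProd s δ * wordProd t ε * sγ * star (wordProd t ε) * star (wordProd s δ)) :
    (star w * w = 1) ∧
    (∀ (μ ν : Fin k → Fin n) (μ' ν' : Fin l → Fin m),
      w * (wordProd s μ * wordProd t μ' * star (wordProd t ν') * star (wordProd s ν))
        = (wordProd s μ * wordProd t μ' * star (wordProd t ν') * star (wordProd s ν)) * w) ∧
    (∀ (k₁ k₂ l₁ l₂ : ℕ), k₁ ≤ k → k₂ ≤ k → l₁ ≤ l → l₂ ≤ l →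
      ∀ (μ : Fin k₁ → Fin n) (ν : Fin k₂ → Fin n) (μ' : Fin l₁ → Fin m) (ν' : Fin l₂ → Fin m),
        ((k₁ = k₂ ∧ l₁ = l₂) →
          star w * (wordProd s μ * wordProd t μ' * star (wordProd t ν') * star (wordProd s ν)) * w
            = wordProd s μ * wordProd t μ' * star (wordProd t ν') * star (wordProd s ν)) ∧
        (¬(k₁ = k₂ ∧ l₁ = l₂) →
          star w * (wordProd s μ * wordProd t μ' * star (wordProd t ν') * star (wordProd s ν)) * w
            = 0)) := by
  have hst : MonomialsQuasiCommute R s t :=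
    hs.monomialsQuasiCommute ht fun i j => quasiCommute_iff.2 ⟨q i j, (hcomm i j).symm⟩
  have hu := isCuntzFamily_biwordProd hs ht k l
  have hw' : w = canonicalEndo (biwordProd s t (k := k) (l := l)) sγ := by
    simp only [hw, canonicalEndo, Fintype.sum_prod_type, biwordProd, star_mul, mul_assoc]
  have hiso : star w * w = 1 := hw' ▸ hu.star_canonicalEndo_mul_self (hγ ▸
    star_mul_mul_mul_self_eq_one (hs.isToeplitzFamily.star_pow_mul_mul_pow_mul x x' p)
      (ht.isToeplitzFamily.star_pow_mul_mul_pow_mul y y' r))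
  have hcommute (a b : (Fin k → Fin n) × (Fin l → Fin m)) :
      Commute w (biwordProd s t a * star (biwordProd s t b)) :=
    hw' ▸ hu.isToeplitzFamily.commute_canonicalEndo sγ a b
  simp only [wordProd_mul_mul_star_mul_star]
  refine ⟨hiso, fun _ _ _ _ => hcommute _ _, ?_⟩
  refine fun k₁ k₂ l₁ l₂ hk₁ hk₂ hl₁ hl₂ μ ν μ' ν' => ⟨?_, ?_⟩
  · rintro ⟨rfl, rfl⟩
    obtain ⟨d, rfl⟩ := Nat.exists_eq_add_of_le hk₁
    obtain ⟨e, rfl⟩ := Nat.exists_eq_add_of_le hl₁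
    rw [mul_assoc, ← (hs.commute_biwordProd_mul_star_of_add ht hst hcommute _ _).eq, ← mul_assoc,
      hiso, one_mul]
  · intro hne
    rw [hw', star_canonicalEndo_mul_mul_canonicalEndo]
    refine Finset.sum_eq_zero fun i _ => Finset.sum_eq_zero fun j _ => ?_
    rw [hγ, (hs.isToeplitzFamily.isAperiodic_pow_mul hx hp).biword_compression_eq_zero hst
      hs.isToeplitzFamily ht.isToeplitzFamily (ht.isToeplitzFamily.isAperiodic_pow_mul hy hr)
      (mul_mem (pow_mem (apply_mem_starMonomials s x) p) (apply_mem_starMonomials s x'))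
      (mul_mem (pow_mem (apply_mem_starMonomials t y) r) (apply_mem_starMonomials t y'))
      hne hk₁ hk₂ hl₁ hl₂, mul_zero, zero_mul]

theorem stmt_17 {A : Type*} [NormedRing A] [StarRing A] [CStarRing A]
    [NormedAlgebra ℂ A] [StarModule ℂ A] [CompleteSpace A]
    {n m : ℕ} (hn : 2 ≤ n) (hm : 2 ≤ m)
    (Θ : Fin n → Fin m → ℂ) (hΘ : ∀ i j, ‖Θ i j‖ = 1)
    (s : Fin n → A) (t : Fin m → A)
    (hs : ∀ i j : Fin n, star (s i) * s j = if i = j then 1 else 0)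
    (ht : ∀ r l : Fin m, star (t r) * t l = if r = l then 1 else 0)
    (hQ : ∑ i : Fin n, s i * star (s i) = 1)
    (hP : ∑ j : Fin m, t j * star (t j) = 1)
    (hcomm : ∀ (i : Fin n) (j : Fin m), s i * t j = Θ i j • (t j * s i))
    (k l : ℕ)
    (sγ : A)
    (hγ : sγ = (s ⟨0, by omega⟩) ^ (2 * k) * s ⟨1, by omega⟩ *
      (t ⟨0, by omega⟩) ^ (2 * l) * t ⟨1, by omega⟩)
    (w : A)
    (hw : w = ∑ δ : Fin k → Fin n, ∑ ε : Fin l → Fin m,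
      wordProd s δ * wordProd t ε * sγ * star (wordProd t ε) * star (wordProd s δ)) :
    (star w * w = 1) ∧
    (∀ (μ ν : Fin k → Fin n) (μ' ν' : Fin l → Fin m),
      w * (wordProd s μ * wordProd t μ' * star (wordProd t ν') * star (wordProd s ν))
        = (wordProd s μ * wordProd t μ' * star (wordProd t ν') * star (wordProd s ν)) * w) ∧
    (∀ (k₁ k₂ l₁ l₂ : ℕ), k₁ ≤ k → k₂ ≤ k → l₁ ≤ l → l₂ ≤ l →
      ∀ (μ : Fin k₁ → Fin n) (ν : Fin k₂ → Fin n) (μ' : Fin l₁ → Fin m) (ν' : Fin l₂ → Fin m),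
        ((k₁ = k₂ ∧ l₁ = l₂) →
          star w * (wordProd s μ * wordProd t μ' * star (wordProd t ν') * star (wordProd s ν)) * w
            = wordProd s μ * wordProd t μ' * star (wordProd t ν') * star (wordProd s ν)) ∧
        (¬(k₁ = k₂ ∧ l₁ = l₂) →
          star w * (wordProd s μ * wordProd t μ' * star (wordProd t ν') * star (wordProd s ν)) * w
            = 0)) :=
  stmt_17_general (fun i j => Units.mk0 (Θ i j) (norm_ne_zero_iff.1 (hΘ i j ▸ one_ne_zero)))
    ⟨hs, hQ⟩ ⟨ht, hP⟩ hcomm (by simp) (by simp) (Nat.le_mul_of_pos_left k two_pos)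
    (Nat.le_mul_of_pos_left l two_pos) (hγ.trans (mul_assoc _ _ _)) hw
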